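/- Let 𝒫 and 𝒬 be distinct type systems on Ω that are both multinuclear and simple. Then Stab_V(𝒫) ≠ Stab_V(𝒬). -/

import Mathlib

/-- Addresses: finite words over the alphabet `{0,1}` (`Bool`). -/
abbrev Addr : Type := List Bool

/-- Cantor space: infinite words over the alphabet `{0,1}`. -/
abbrev Cantor : Type := ℕ → Bool

/-- Prepend the finite word `α` to the infinite word `w`. -/
def wcat (α : Addr) (w : Cantor) : Cantor := fun n =>
  if h : n < α.length then α.get ⟨n, h⟩ else w (n - α.length)

/-- The cone of the address `α`: the set of infinite words having `α` as a prefix. -/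
def cone (α : Addr) : Set Cantor := Set.range (wcat α)

/-- `g` is a prefix substitution map: there are partitions of Cantor space into cones
`(A i)𝔠` and `(B i)𝔠` such that `g` maps `(A i) w` to `(B i) w`. -/
def IsPrefixSubst (g : Equiv.Perm Cantor) : Prop :=
  ∃ (n : ℕ) (A B : Fin n → Addr),
    (∀ i j, i ≠ j → Disjoint (cone (A i)) (cone (A j))) ∧
    (⋃ i, cone (A i)) = Set.univ ∧
    (∀ i j, i ≠ j → Disjoint (cone (B i)) (cone (B j))) ∧
    (⋃ i, cone (B i)) = Set.univ ∧
    (∀ i w, g (wcat (A i) w) = wcat (B i) w)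

/-- Thompson's group `V`, as the set of prefix substitution maps inside `Equiv.Perm Cantor`. -/
def VSet : Set (Equiv.Perm Cantor) := { g | IsPrefixSubst g }

/-- `α ^ g = β` : `g` maps the cone of `α` onto the cone of `β` by the prefix
substitution `α ↦ β`. -/
def actsOn (g : Equiv.Perm Cantor) (α β : Addr) : Prop :=
  ∀ w, g (wcat α w) = wcat β w

/-- A subset of `Equiv.Perm Cantor` that is closed under the group operations. -/
def IsSubgroupSet (M : Set (Equiv.Perm Cantor)) : Prop :=
  (1 : Equiv.Perm Cantor) ∈ M ∧ (∀ g ∈ M, ∀ h ∈ M, g * h ∈ M) ∧ ∀ g ∈ M, g⁻¹ ∈ M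

/-- `M` is a maximal subgroup of Thompson's group `V`. -/
def IsMaximalSubgroupOfV (M : Set (Equiv.Perm Cantor)) : Prop :=
  IsSubgroupSet M ∧ M ⊆ VSet ∧ M ≠ VSet ∧
    ∀ H : Set (Equiv.Perm Cantor),
      IsSubgroupSet H → M ⊆ H → H ⊆ VSet → H = M ∨ H = VSet

/-- A relation on addresses is coherent if `α ∼ β` implies `α0 ∼ β0` and `α1 ∼ β1`. -/
def Coherent (r : Addr → Addr → Prop) : Prop :=
  ∀ α β, r α β → r (α ++ [false]) (β ++ [false]) ∧ r (α ++ [true]) (β ++ [true])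

/-- A relation on addresses is reduced if `α0 ∼ β0` and `α1 ∼ β1` imply `α ∼ β`. -/
def Reduced (r : Addr → Addr → Prop) : Prop :=
  ∀ α β, r (α ++ [false]) (β ++ [false]) → r (α ++ [true]) (β ++ [true]) → r α β

/-- A type system: a coherent and reduced equivalence relation on addresses
(identified with the partition of `Ω` into its classes). -/
def IsTypeSystem (r : Addr → Addr → Prop) : Prop :=
  Equivalence r ∧ Coherent r ∧ Reduced r

/-- `g` fixes the parts of `r`: for all but finitely many addresses `α`, the image
`α ^ g` is defined and equivalent to `α`. -/
def FixesParts (r : Addr → Addr → Prop) (g : Equiv.Perm Cantor) : Prop :=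
  { α : Addr | ¬ ∃ β, actsOn g α β ∧ r α β }.Finite

/-- `g` stabilizes `r`: on some cofinite set of addresses, `α ^ g` is defined and `g`
preserves equivalence and inequivalence of addresses. -/
def Stabilizes (r : Addr → Addr → Prop) (g : Equiv.Perm Cantor) : Prop :=
  ∃ Ω₀ : Set Addr, Ω₀ᶜ.Finite ∧ (∀ α ∈ Ω₀, ∃ β, actsOn g α β) ∧
    ∀ α ∈ Ω₀, ∀ α' ∈ Ω₀, ∀ β β', actsOn g α β → actsOn g α' β' → (r α α' ↔ r β β')

/-- `Fix_V(𝒫)`: the elements of Thompson's group `V` fixing the parts of `r`. -/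
def FixSet (r : Addr → Addr → Prop) : Set (Equiv.Perm Cantor) :=
  { g | IsPrefixSubst g ∧ FixesParts r g }

/-- `Stab_V(𝒫)`: the elements of Thompson's group `V` stabilizing `r`. -/
def StabSet (r : Addr → Addr → Prop) : Set (Equiv.Perm Cantor) :=
  { g | IsPrefixSubst g ∧ Stabilizes r g }

/-- The type system of `s` is a quotient of that of `r`. -/
def IsQuotientOf (s r : Addr → Addr → Prop) : Prop :=
  IsTypeSystem s ∧ ∀ α β, r α β → s α β

/-- A simple type system: the universal relation is a proper quotient, and every
quotient is either the type system itself or the universal one. -/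
def SimpleTS (r : Addr → Addr → Prop) : Prop :=
  IsTypeSystem r ∧ (∃ α β : Addr, ¬ r α β) ∧
    ∀ s : Addr → Addr → Prop, IsQuotientOf s r →
      (∀ α β, s α β ↔ r α β) ∨ ∀ α β, s α β

/-- The type (equivalence class) of the address `α`. -/
def typeOf (r : Addr → Addr → Prop) (α : Addr) : Set Addr := { β | r α β }

/-- `S` is a union of `r`-classes, i.e. a set of types of the type system. -/
def Saturated (r : Addr → Addr → Prop) (S : Set Addr) : Prop :=
  ∀ α ∈ S, ∀ β, r α β → β ∈ S

/-- `S` is child-closed: with each address (type) it contains both of its children. -/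
def ChildClosed (S : Set Addr) : Prop :=
  ∀ α ∈ S, α ++ [false] ∈ S ∧ α ++ [true] ∈ S

/-- The word `γ` determines a path through `S` from (the type of) `α`. -/
def PathThrough (S : Set Addr) (α γ : Addr) : Prop :=
  ∀ ζ : Addr, ζ <+: γ → α ++ ζ ∈ S

/-- `S` is strongly connected. -/
def StronglyConnected (r : Addr → Addr → Prop) (S : Set Addr) : Prop :=
  ∀ α ∈ S, ∀ β ∈ S, ∃ γ : Addr, γ ≠ [] ∧ PathThrough S α γ ∧ r (α ++ γ) β

/-- A nucleus: a (nonempty) child-closed and strongly connected set of types. -/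
def IsNucleus (r : Addr → Addr → Prop) (S : Set Addr) : Prop :=
  S.Nonempty ∧ Saturated r S ∧ ChildClosed S ∧ StronglyConnected r S

/-- `S` consists of exactly one type. -/
def IsSingleType (r : Addr → Addr → Prop) (S : Set Addr) : Prop :=
  ∃ α : Addr, S = typeOf r α

/-- A multinuclear type system: finitely many pairwise disjoint nuclei containing the
types of all sufficiently long addresses. -/
def Multinuclear (r : Addr → Addr → Prop) : Prop :=
  ∃ (k : ℕ) (Q : Fin k → Set Addr), 0 < k ∧ (∀ i, IsNucleus r (Q i)) ∧
    (∀ i j, i ≠ j → Disjoint (Q i) (Q j)) ∧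
    ∃ t : ℕ, 0 < t ∧ ∀ α : Addr, t ≤ α.length → ∃ i, α ∈ Q i

/-- A nuclear type system: a single nucleus containing the types of all sufficiently
long addresses. -/
def Nuclear (r : Addr → Addr → Prop) : Prop :=
  ∃ Q : Set Addr, IsNucleus r Q ∧ ∃ t : ℕ, 0 < t ∧ ∀ α : Addr, t ≤ α.length → α ∈ Q

/-- An atomic binuclear type system: two disjoint singleton nuclei containing the types
of all sufficiently long addresses. -/
def AtomicBinuclear (r : Addr → Addr → Prop) : Prop :=
  ∃ Q₁ Q₂ : Set Addr, IsNucleus r Q₁ ∧ IsNucleus r Q₂ ∧ Disjoint Q₁ Q₂ ∧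
    IsSingleType r Q₁ ∧ IsSingleType r Q₂ ∧
    ∃ t : ℕ, 0 < t ∧ ∀ α : Addr, t ≤ α.length → α ∈ Q₁ ∪ Q₂

/-- The data `(𝒬, ℛ)` witnessing that a type system is quasinuclear. -/
def QuasinuclearData (r : Addr → Addr → Prop) (Q R : Set Addr) : Prop :=
  Q.Nonempty ∧ R.Nonempty ∧ Saturated r Q ∧ Saturated r R ∧ Disjoint Q R ∧
    (∃ t : ℕ, 0 < t ∧ ∀ α : Addr, t ≤ α.length → α ∈ Q ∪ R) ∧
    IsNucleus r R ∧ StronglyConnected r Q ∧ ChildClosed (Q ∪ R) ∧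
    ∀ α ∈ Q, ∀ β ∈ R, ∃ γ : Addr, r (α ++ γ) β

/-- A quasinuclear type system. -/
def Quasinuclear (r : Addr → Addr → Prop) : Prop :=
  ∃ Q R : Set Addr, QuasinuclearData r Q R

/-- `𝒬†`: the types of `𝒬` both of whose children lie in `𝒬`. -/
def QDagger (Q : Set Addr) : Set Addr :=
  { α ∈ Q | α ++ [false] ∈ Q ∧ α ++ [true] ∈ Q }

/-- An atomic quasinuclear type system: the nucleus `ℛ` is a single type. -/
def AtomicQuasinuclear (r : Addr → Addr → Prop) : Prop :=
  ∃ Q R : Set Addr, QuasinuclearData r Q R ∧ IsSingleType r R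

/-!
Let `r` and `s` be multinuclear. If every element of `V` fixing the parts of `r` stabilizes `s`,
then `s` is a quotient of `r`; when `r` is simple and `s` is not universal this forces `s = r`.

Suppose first that `α` and `β` are incomparable and `α ∼ᵣ β`. The element of `V` exchanging the
cones of `α` and `β` fixes the parts of `r`, hence stabilizes `s`. Since `s` is reduced, `α` and `β`
may be replaced by `αγx` and `βγx` with `γ` long and `x` a letter, so that `αγ` lies in an
`s`-nucleus. The swap of `αγx` and `βγx` then fixes an address of this nucleus, namely the sibling
of `αγx`. Every descendant of `αγx` is `s`-equivalent to arbitrarily deep descendants of that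
sibling, which the swap does not move, so it is `s`-equivalent to its own image below `βγx`. Hence
`αγx ∼ₛ βγx`.

If `α ∼ᵣ β` are comparable, again pass to `αγx` and `βγx`, now with `αγ` in an `r`-nucleus. If
`αγx` is still a prefix of `βγx`, some descendant `δ` of the sibling of `αγx` is `r`-equivalent to
`αγx`; it is incomparable to both, and the first case applies to `αγx`, `δ` and to `δ`, `βγx`.
-/

/-! ### Addresses and cones -/

section Cones

variable {α β : Addr}

/-- Two addresses are incomparable if neither is a prefix of the other, i.e. if their cones are
disjoint. -/
abbrev Incomparable (α β : Addr) : Prop := IncompRel (· <+: ·) α β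

lemma wcat_apply_of_lt {n : ℕ} (hn : n < α.length) (w : Cantor) : wcat α w n = α[n] :=
  dif_pos hn

lemma wcat_apply_length_add (α : Addr) (w : Cantor) (n : ℕ) : wcat α w (α.length + n) = w n := by
  simp [wcat]

lemma wcat_append (α β : Addr) (w : Cantor) : wcat (α ++ β) w = wcat α (wcat β w) := by
  funext n
  grind [wcat]

lemma wcat_ofFn_shift (n : ℕ) (w : Cantor) :
    wcat (List.ofFn fun i : Fin n => w i) (fun k => w (n + k)) = w := by
  funext m
  grind [wcat]

lemma prefix_of_wcat_eq {w v : Cantor} (h : wcat α w = wcat β v)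
    (hlen : α.length ≤ β.length) : α <+: β := by
  refine List.prefix_iff_getElem.2 ⟨hlen, fun n hn => ?_⟩
  rw [← wcat_apply_of_lt hn w, h, wcat_apply_of_lt]

lemma wcat_left_injective : Function.Injective wcat := by
  -- Past the end of `α` the letters of `wcat α w` are those of `w`, hence arbitrary.
  have not_length_lt {α β : Addr} (h : wcat α = wcat β) : ¬ α.length < β.length := by
    intro hlt
    have := congrFun (congrFun h fun _ => !β[α.length]) α.length
    simp [wcat, hlt] at this
  intro α β h
  have hlen : α.length = β.length :=
    le_antisymm (not_lt.1 (not_length_lt h.symm)) (not_lt.1 (not_length_lt h))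
  exact (prefix_of_wcat_eq (congrFun h fun _ => false) hlen.le).eq_of_length hlen

lemma wcat_mem_cone (α : Addr) (w : Cantor) : wcat α w ∈ cone α := ⟨w, rfl⟩

lemma Incomparable.symm (h : Incomparable α β) : Incomparable β α :=
  IncompRel.symm h

lemma Incomparable.disjoint_cone (h : Incomparable α β) : Disjoint (cone α) (cone β) := by
  rw [Set.disjoint_left]
  rintro _ ⟨w, rfl⟩ ⟨v, hv⟩
  rcases le_total α.length β.length with hlen | hlen
  · exact h.1 (prefix_of_wcat_eq hv.symm hlen)
  · exact h.2 (prefix_of_wcat_eq hv hlen)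

lemma Incomparable.wcat_notMem_cone (h : Incomparable α β) (w : Cantor) : wcat α w ∉ cone β :=
  Set.disjoint_left.1 h.disjoint_cone (wcat_mem_cone α w)

lemma incomparable_of_length_eq (hlen : α.length = β.length) (hne : α ≠ β) : Incomparable α β :=
  ⟨fun h => hne (h.eq_of_length hlen), fun h => hne (h.eq_of_length hlen.symm).symm⟩

lemma Incomparable.append (h : Incomparable α β) (γ δ : Addr) : Incomparable (α ++ γ) (β ++ δ) := by
  refine ⟨fun hp => ?_, fun hp => ?_⟩
  · exact (List.prefix_or_prefix_of_prefix ((List.prefix_append α γ).trans hp)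
      (List.prefix_append β δ)).elim h.1 h.2
  · exact (List.prefix_or_prefix_of_prefix ((List.prefix_append β δ).trans hp)
      (List.prefix_append α γ)).elim h.2 h.1

lemma Incomparable.append_right (h : Incomparable α β) (γ : Addr) : Incomparable α (β ++ γ) := by
  simpa only [List.append_nil] using h.append [] γ

lemma incomparable_siblings (α : Addr) (x : Bool) : Incomparable (α ++ [x]) (α ++ [!x]) :=
  incomparable_of_length_eq (by simp) (by simp)

lemma exists_forall_length_ge_notMem {A : Type*} {S : Set (List A)} (hS : S.Finite) :
    ∃ N, ∀ l : List A, N ≤ l.length → l ∉ S := by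
  obtain ⟨M, hM⟩ := (hS.image List.length).bddAbove
  exact ⟨M + 1, fun l hl hmem => absurd (hM (Set.mem_image_of_mem _ hmem)) (by omega)⟩

end Cones

/-! ### The action of `V` on addresses -/

section Action

variable {r : Addr → Addr → Prop} {g : Equiv.Perm Cantor} {α β γ : Addr}

lemma actsOn.append (h : actsOn g α β) (γ : Addr) : actsOn g (α ++ γ) (β ++ γ) := fun w => by
  rw [wcat_append, wcat_append, h]

lemma actsOn.unique (hβ : actsOn g α β) (hγ : actsOn g α γ) : β = γ :=
  wcat_left_injective <| funext fun w => (hβ w).symm.trans (hγ w)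

lemma actsOn.image_cone (h : actsOn g α β) : g '' cone α = cone β := by
  rw [cone, cone, ← Set.range_comp]
  exact congrArg Set.range (funext h)

lemma iUnion_cone_of_length (N : ℕ) : ⋃ α : {α : Addr // α.length = N}, cone α = Set.univ :=
  Set.eq_univ_of_forall fun w => Set.mem_iUnion.2
    ⟨⟨List.ofFn fun i : Fin N => w i, List.length_ofFn⟩, _, wcat_ofFn_shift N w⟩

lemma isPrefixSubst_of_finite_not_actsOn
    (h : {α : Addr | ¬ ∃ β, actsOn g α β}.Finite) : IsPrefixSubst g := by
  obtain ⟨N, hN⟩ := exists_forall_length_ge_notMem h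
  have : Finite {α : Addr // α.length = N} := (List.finite_length_eq Bool N).to_subtype
  obtain ⟨n, ⟨e⟩⟩ := Finite.exists_equiv_fin {α : Addr // α.length = N}
  choose image himage using fun i : Fin n => not_not.1 (hN (e.symm i) (e.symm i).2.ge)
  have hdisj : ∀ i j, i ≠ j → Disjoint (cone (e.symm i)) (cone (e.symm j)) := fun i j hij =>
    (incomparable_of_length_eq ((e.symm i).2.trans (e.symm j).2.symm)
      fun h => hij (e.symm.injective (Subtype.ext h))).disjoint_cone
  have hcover : ⋃ i, cone (e.symm i) = Set.univ :=
    (e.symm.surjective.iUnion_comp fun α => cone α).trans (iUnion_cone_of_length N)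
  refine ⟨n, fun i => e.symm i, image, hdisj, hcover, fun i j hij => ?_, ?_, himage⟩
  · rw [← (himage i).image_cone, ← (himage j).image_cone]
    exact (Set.disjoint_image_iff g.injective).2 (hdisj i j hij)
  · simp only [← (himage _).image_cone]
    rw [← Set.image_iUnion, hcover, Set.image_univ, g.range_eq_univ]

lemma FixesParts.isPrefixSubst (h : FixesParts r g) : IsPrefixSubst g :=
  isPrefixSubst_of_finite_not_actsOn <|
    h.subset fun _ hα ⟨β, hβ⟩ => hα ⟨β, hβ.1⟩

lemma FixesParts.stabilizes (hr : Equivalence r) (h : FixesParts r g) : Stabilizes r g := by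
  refine ⟨{α | ∃ β, actsOn g α β ∧ r α β}, h, fun α ⟨β, hβ, _⟩ => ⟨β, hβ⟩, ?_⟩
  rintro α ⟨β, hβ, hαβ⟩ α' ⟨β', hβ', hαβ'⟩ γ γ' hγ hγ'
  obtain rfl := hβ.unique hγ
  obtain rfl := hβ'.unique hγ'
  exact ⟨fun hαα' => hr.trans (hr.symm hαβ) (hr.trans hαα' hαβ'),
    fun hββ' => hr.trans hαβ (hr.trans hββ' (hr.symm hαβ'))⟩

lemma fixSet_subset_stabSet (hr : Equivalence r) :
    FixSet r ⊆ StabSet r := fun _ hg => ⟨hg.1, hg.2.stabilizes hr⟩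

end Action

/-! ### Coherence, reducedness and nuclei -/

section Nuclei

variable {r s : Addr → Addr → Prop} {S : Set Addr} {α β : Addr} {x : Bool}

lemma Coherent.append (hr : Coherent r) (h : r α β) (γ : Addr) : r (α ++ γ) (β ++ γ) := by
  induction γ using List.reverseRecOn with
  | nil => simpa only [List.append_nil] using h
  | append_singleton γ x ih =>
    simp only [← List.append_assoc]
    cases x
    · exact (hr _ _ ih).1
    · exact (hr _ _ ih).2

lemma Reduced.of_forall_singleton (hr : Reduced r) (h : ∀ x, r (α ++ [x]) (β ++ [x])) : r α β :=
  hr α β (h false) (h true)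

lemma Reduced.of_forall_length_eq (hr : Reduced r) (n : ℕ)
    (h : ∀ γ : Addr, γ.length = n → r (α ++ γ) (β ++ γ)) : r α β := by
  induction n with
  | zero => simpa only [List.append_nil] using h [] rfl
  | succ n ih =>
    refine ih fun γ hγ => hr.of_forall_singleton fun x => ?_
    simpa only [List.append_assoc] using h (γ ++ [x]) (by simp [hγ])

lemma ChildClosed.append_mem (hS : ChildClosed S) (hα : α ∈ S) (γ : Addr) : α ++ γ ∈ S := by
  induction γ using List.reverseRecOn with
  | nil => simpa only [List.append_nil] using hα
  | append_singleton γ x ih =>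
    rw [← List.append_assoc]
    cases x
    · exact (hS _ ih).1
    · exact (hS _ ih).2

lemma IsNucleus.childClosed (hS : IsNucleus r S) : ChildClosed S := hS.2.2.1

lemma IsNucleus.exists_append_rel (hS : IsNucleus r S) (hα : α ∈ S) (hβ : β ∈ S) (n : ℕ) :
    ∃ γ : Addr, n ≤ γ.length ∧ r (α ++ γ) β := by
  obtain ⟨γ, -, -, hγ⟩ :=
    hS.2.2.2 _ (hS.childClosed.append_mem hα (List.replicate n false)) β hβ
  exact ⟨List.replicate n false ++ γ, by simp, by rwa [← List.append_assoc]⟩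

lemma IsNucleus.exists_incomparable_rel (hS : IsNucleus r S) (hα : α ∈ S) (hβ : α ++ [x] <+: β) :
    ∃ δ, r δ (α ++ [x]) ∧ Incomparable δ (α ++ [x]) ∧ Incomparable δ β := by
  obtain ⟨γ, -, hγ⟩ := hS.exists_append_rel (hS.childClosed.append_mem hα [!x])
    (hS.childClosed.append_mem hα [x]) 0
  have hinc : Incomparable (α ++ [!x] ++ γ) (α ++ [x]) :=
    ((incomparable_siblings α x).append_right γ).symm
  obtain ⟨ζ, rfl⟩ := hβ
  exact ⟨_, hγ, hinc, hinc.append_right ζ⟩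

lemma Multinuclear.rel_of_forall_nucleus (hr : Multinuclear r) (hs : Reduced s)
    (h : ∀ γ S, IsNucleus r S → α ++ γ ∈ S → ∀ x, s (α ++ γ ++ [x]) (β ++ γ ++ [x])) : s α β := by
  obtain ⟨k, Q, -, hQ, -, t, -, ht⟩ := hr
  refine hs.of_forall_length_eq t fun γ hγ => hs.of_forall_singleton ?_
  obtain ⟨i, hi⟩ := ht (α ++ γ) (by simp [hγ])
  exact h γ (Q i) (hQ i) hi

end Nuclei

/-! ### Cone swaps -/

open scoped Classical in
/-- Exchange the prefixes `α` and `β` of infinite words; words in neither cone are left alone. -/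
noncomputable def swapPrefix (α β : Addr) (w : Cantor) : Cantor :=
  if w ∈ cone α then wcat β fun n => w (α.length + n)
  else if w ∈ cone β then wcat α fun n => w (β.length + n)
  else w

lemma swapPrefix_wcat_left (α β : Addr) (w : Cantor) : swapPrefix α β (wcat α w) = wcat β w := by
  simp only [swapPrefix, wcat_mem_cone, if_true, wcat_apply_length_add]

lemma swapPrefix_wcat_right {α β : Addr} (h : Incomparable α β) (w : Cantor) :
    swapPrefix α β (wcat β w) = wcat α w := by
  simp only [swapPrefix, h.symm.wcat_notMem_cone, wcat_mem_cone, if_true, if_false,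
    wcat_apply_length_add]

lemma swapPrefix_of_notMem {α β : Addr} {w : Cantor} (hα : w ∉ cone α) (hβ : w ∉ cone β) :
    swapPrefix α β w = w := by
  simp only [swapPrefix, hα, hβ, if_false]

lemma swapPrefix_involutive {α β : Addr} (h : Incomparable α β) :
    Function.Involutive (swapPrefix α β) := by
  intro w
  by_cases hα : w ∈ cone α
  · obtain ⟨v, rfl⟩ := hα
    rw [swapPrefix_wcat_left, swapPrefix_wcat_right h]
  by_cases hβ : w ∈ cone β
  · obtain ⟨v, rfl⟩ := hβ
    rw [swapPrefix_wcat_right h, swapPrefix_wcat_left]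
  rw [swapPrefix_of_notMem hα hβ, swapPrefix_of_notMem hα hβ]

/-- The element of `V` exchanging the disjoint cones of `α` and `β` by prefix substitution and
fixing the rest of Cantor space pointwise. -/
noncomputable def coneSwap {α β : Addr} (h : Incomparable α β) : Equiv.Perm Cantor :=
  (swapPrefix_involutive h).toPerm

section ConeSwap

variable {α β : Addr} (h : Incomparable α β)

lemma actsOn_coneSwap_left : actsOn (coneSwap h) α β := swapPrefix_wcat_left α β

lemma actsOn_coneSwap_right : actsOn (coneSwap h) β α := swapPrefix_wcat_right h

lemma actsOn_coneSwap_of_incomparable {δ : Addr} (hα : Incomparable δ α) (hβ : Incomparable δ β) :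
    actsOn (coneSwap h) δ δ := fun w =>
  swapPrefix_of_notMem (hα.wcat_notMem_cone w) (hβ.wcat_notMem_cone w)

lemma fixesParts_coneSwap {r : Addr → Addr → Prop} (hr : Equivalence r) (hc : Coherent r)
    (hαβ : r α β) : FixesParts r (coneSwap h) := by
  refine ((α.inits ++ β.inits).finite_toSet).subset fun δ hδ => ?_
  simp only [Set.mem_ofPred_eq, List.mem_append, List.mem_inits]
  by_contra! hpre
  obtain ⟨hδα, hδβ⟩ := hpre
  apply hδ
  by_cases hα : α <+: δ
  · obtain ⟨γ, rfl⟩ := hα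
    exact ⟨β ++ γ, (actsOn_coneSwap_left h).append γ, hc.append hαβ γ⟩
  by_cases hβ : β <+: δ
  · obtain ⟨γ, rfl⟩ := hβ
    exact ⟨α ++ γ, (actsOn_coneSwap_right h).append γ, hc.append (hr.symm hαβ) γ⟩
  exact ⟨δ, actsOn_coneSwap_of_incomparable h ⟨hδα, hα⟩ ⟨hδβ, hβ⟩, hr.refl δ⟩

lemma coneSwap_mem_fixSet {r : Addr → Addr → Prop} (hr : Equivalence r) (hc : Coherent r)
    (hαβ : r α β) : coneSwap h ∈ FixSet r :=
  ⟨(fixesParts_coneSwap h hr hc hαβ).isPrefixSubst, fixesParts_coneSwap h hr hc hαβ⟩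

end ConeSwap

/-! ### Comparison of two type systems -/

lemma IsNucleus.rel_of_stabilizes {s : Addr → Addr → Prop} (hse : Equivalence s)
    (hsr : Reduced s) {S : Set Addr} (hS : IsNucleus s S) {g : Equiv.Perm Cantor}
    (hg : Stabilizes s g) {α β δ : Addr} (hα : α ∈ S) (hδ : δ ∈ S) (hgα : actsOn g α β)
    (hgδ : actsOn g δ δ) : s α β := by
  obtain ⟨Ω₀, hfin, -, hstab⟩ := hg
  obtain ⟨N, hN⟩ := exists_forall_length_ge_notMem hfin
  have mem_of_deep (ζ η : Addr) (hη : N ≤ η.length) : ζ ++ η ∈ Ω₀ :=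
    not_not.1 (hN (ζ ++ η) (by simp only [List.length_append]; omega))
  refine hsr.of_forall_length_eq N fun η hη => ?_
  obtain ⟨ζ, hζ, hδα⟩ := hS.exists_append_rel hδ (hS.childClosed.append_mem hα η) N
  have hδβ : s (δ ++ ζ) (β ++ η) :=
    (hstab _ (mem_of_deep δ ζ hζ) _ (mem_of_deep α η hη.ge) _ _
      (hgδ.append ζ) (hgα.append η)).1 hδα
  exact hse.trans (hse.symm hδα) hδβ

section Comparison

variable {r s : Addr → Addr → Prop} (hre : Equivalence r) (hrc : Coherent r)
  (hse : Equivalence s) (hsr : Reduced s) (hsm : Multinuclear s) (hsub : FixSet r ⊆ StabSet s)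
include hre hrc hse hsr hsm hsub

lemma rel_of_incomparable {α β : Addr} (hinc : Incomparable α β) (h : r α β) : s α β := by
  refine hsm.rel_of_forall_nucleus hsr fun γ S hS hαγ x => ?_
  have hγ : Incomparable (α ++ γ) (β ++ γ) := hinc.append γ γ
  have hγx : Incomparable (α ++ γ ++ [x]) (β ++ γ ++ [x]) := hγ.append [x] [x]
  have hswap : Stabilizes s (coneSwap hγx) :=
    (hsub (coneSwap_mem_fixSet hγx hre hrc (hrc.append (hrc.append h γ) [x]))).2
  have hsibling : actsOn (coneSwap hγx) (α ++ γ ++ [!x]) (α ++ γ ++ [!x]) :=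
    actsOn_coneSwap_of_incomparable hγx (incomparable_siblings _ x).symm (hγ.append [!x] [x])
  exact hS.rel_of_stabilizes hse hsr hswap (hS.childClosed.append_mem hαγ [x])
    (hS.childClosed.append_mem hαγ [!x]) (actsOn_coneSwap_left hγx) hsibling

lemma rel_of_length_le (hrm : Multinuclear r) {α β : Addr} (hlen : α.length ≤ β.length)
    (h : r α β) : s α β := by
  refine hrm.rel_of_forall_nucleus hsr fun γ S hS hαγ x => ?_
  have hγx : r (α ++ γ ++ [x]) (β ++ γ ++ [x]) := hrc.append (hrc.append h γ) [x]
  have of_incomparable {ζ η : Addr} : Incomparable ζ η → r ζ η → s ζ η :=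
    rel_of_incomparable hre hrc hse hsr hsm hsub
  by_cases hpre : α ++ γ ++ [x] <+: β ++ γ ++ [x]
  · obtain ⟨δ, hδ, hδα, hδβ⟩ := hS.exists_incomparable_rel hαγ hpre
    exact hse.trans (of_incomparable hδα.symm (hre.symm hδ))
      (of_incomparable hδβ (hre.trans hδ hγx))
  · refine of_incomparable ⟨hpre, fun hpre' => hpre ?_⟩ hγx
    rw [hpre'.eq_of_length_le (by simpa using hlen)]

lemma rel_of_fixSet_subset_stabSet (hrm : Multinuclear r) {α β : Addr} (h : r α β) : s α β :=
  (le_total α.length β.length).elim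
    (fun hlen => rel_of_length_le hre hrc hse hsr hsm hsub hrm hlen h)
    fun hlen => hse.symm (rel_of_length_le hre hrc hse hsr hsm hsub hrm hlen (hre.symm h))

end Comparison

theorem stabSet_injective_on_simple_multinuclear_general
    (r s : Addr → Addr → Prop) (hr : SimpleTS r) (hs : IsTypeSystem s)
    (hsne : ∃ α β : Addr, ¬ s α β) (hrm : Multinuclear r) (hsm : Multinuclear s)
    (hsub : FixSet r ⊆ StabSet s) : r = s := by
  obtain ⟨⟨hre, hrc, -⟩, -, hsimple⟩ := hr
  have hquot : IsQuotientOf s r := ⟨hs, fun _ _ =>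
    rel_of_fixSet_subset_stabSet hre hrc hs.1 hs.2.2 hsm hsub hrm⟩
  rcases hsimple s hquot with heq | huniv
  · exact funext₂ fun α β => propext (heq α β).symm
  · obtain ⟨α, β, hαβ⟩ := hsne
    exact absurd (huniv α β) hαβ

/-- **Statement 16.**  Distinct simple multinuclear type systems have distinct
stabilizers in Thompson's group `V`. -/
theorem stabSet_injective_on_simple_multinuclear
    (r s : Addr → Addr → Prop) (hr : SimpleTS r) (hs : SimpleTS s)
    (hrm : Multinuclear r) (hsm : Multinuclear s) (hne : r ≠ s) :
    StabSet r ≠ StabSet s := fun heq =>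
  hne <| stabSet_injective_on_simple_multinuclear_general r s hr hs.1 hs.2.1 hrm hsm <|
    (fixSet_subset_stabSet hr.1.1).trans heq.subset
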